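/- arXiv:2204.13742 — 5 statements merged into one kernel-verified Lean document; each statement's English description precedes it below -/
import Mathlib

section
/- Let (S, ≤) be a finite linearly ordered set, let η ⊆ S × S be a relation with (s₁,s₂) ∈ η implying s₁ ≤ s₂, and let A be the il-representation matrix of (S, ≤, η). If A admits a (2p+1)-mixed minor, then for every permutation π of {1,…,p} there exist row indices i₁ < i₂ < … < i_p in R (in the lexicographic order on R) and column indices c₁ < c₂ < … < c_p in S such that the p × p submatrix A[{i₁,…,i_p}, {c₁,…,c_p}] equals the permutation matrix of π, each i_k belongs to η, and the first coordinates of i₁,…,i_p are pairwise distinct. -/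
/-- The lexicographic (non-strict) order on pairs over a linear order. -/
def rowLE {S : Type} [LinearOrder S] (i i' : S × S) : Prop :=
  i.1 < i'.1 ∨ (i.1 = i'.1 ∧ i.2 ≤ i'.2)

/-- The lexicographic strict order on pairs over a linear order. -/
def rowLT {S : Type} [LinearOrder S] (i i' : S × S) : Prop :=
  i.1 < i'.1 ∨ (i.1 = i'.1 ∧ i.2 < i'.2)

/-- The row index set `R = η ∪ {(t,t) : t ∈ S}` of the il-representation
matrix. -/
def RowIdx {S : Type} (η : Set (S × S)) : Type :=
  {i : S × S // i ∈ η ∨ i.1 = i.2}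

open scoped Classical in
/-- The entry of the il-representation matrix of `(S, ≤, η)` in row
`i = (s₁, s₂)` and column `j`: it is `2` iff `j < s₁`, it is `1` iff `i ∈ η`
and `j = s₂`, and `0` otherwise. -/
noncomputable def ilEntry {S : Type} [LinearOrder S] (η : Set (S × S))
    (i : S × S) (j : S) : ℕ :=
  if j < i.1 then 2 else if i ∈ η ∧ j = i.2 then 1 else 0

/-- A zone (given by a set of rows and a set of columns) of the
il-representation matrix is mixed: not all of its rows are equal and not all
of its columns are equal. -/
def ZoneMixed {S : Type} [LinearOrder S] (η : Set (S × S))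
    (RI : Set (RowIdx η)) (SJ : Set S) : Prop :=
  (∃ x ∈ RI, ∃ x' ∈ RI, ∃ c ∈ SJ, ilEntry η x.1 c ≠ ilEntry η x'.1 c) ∧
  (∃ c ∈ SJ, ∃ c' ∈ SJ, ∃ x ∈ RI, ilEntry η x.1 c ≠ ilEntry η x.1 c')

/-- The il-representation matrix of `(S, ≤, η)` has a `k`-mixed minor:
the rows (ordered lexicographically) and the columns can be partitioned into
`k` nonempty consecutive intervals each (encoded by monotone surjections onto
`Fin k`) so that each of the `k²` zones is mixed. -/
def HasMixedMinor {S : Type} [LinearOrder S] [Fintype S] (η : Set (S × S)) (k : ℕ) : Prop :=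
  ∃ (f : RowIdx η → Fin k) (g : S → Fin k),
    (∀ x y : RowIdx η, rowLE x.1 y.1 → f x ≤ f y) ∧
    Monotone g ∧
    Function.Surjective f ∧ Function.Surjective g ∧
    ∀ a b : Fin k, ZoneMixed η (f ⁻¹' {a}) (g ⁻¹' {b})

/-!
In a mixed minor, let `x` be a row outside the last row part. If the first coordinate of `x` lay
beyond some column part `b`, then the first coordinates of all later rows would too, so that the
zone of the last row part and `b` would be constantly `2`. Hence it lies in the first column part,
the later columns meet no entry `2` in the row `x`, and mixedness of the zones there can only come
from entries `1`, that is, from pairs in `η` whose second coordinate lies in the prescribed column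
part.

Such pairs, chosen in every other row part and in column parts permuted by `π`, form the
permutation matrix. If two of them shared the first coordinate, so would all rows of a part
between them. These rows would differ only in entries `1`, so that one of them would have its
second coordinate in the first column part, before that of the earlier pair, contradicting the
lexicographic order.
-/

section RowOrder

variable {S : Type} [LinearOrder S] {i j : S × S}

theorem rowLE_iff_toLex_le : rowLE i j ↔ toLex i ≤ toLex j :=
  Prod.Lex.toLex_le_toLex.symm

theorem rowLE.fst_le (h : rowLE i j) : i.1 ≤ j.1 :=
  Prod.Lex.monotone_fst_ofLex (rowLE_iff_toLex_le.mp h)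

theorem rowLE.snd_le_of_fst_eq (h : rowLE i j) (hij : i.1 = j.1) : i.2 ≤ j.2 :=
  h.elim (fun hlt => absurd hij hlt.ne) And.right

end RowOrder

section Entries

variable {S : Type} [LinearOrder S] {η : Set (S × S)} {i i' : S × S} {c c' : S}

theorem ilEntry_of_lt_fst (h : c < i.1) : ilEntry η i c = 2 :=
  if_pos h

theorem ilEntry_of_mem_of_fst_le (hi : i ∈ η) (h : i.1 ≤ c) :
    ilEntry η i c = if c = i.2 then 1 else 0 := by
  simp [ilEntry, hi, h.not_gt]

theorem mem_and_eq_snd_or_of_ilEntry_ne (hlt : c < i.1 ↔ c' < i'.1)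
    (hne : ilEntry η i c ≠ ilEntry η i' c') : (i ∈ η ∧ c = i.2) ∨ (i' ∈ η ∧ c' = i'.2) := by
  contrapose! hne
  simp [ilEntry, hlt, not_and.mpr hne.1, not_and.mpr hne.2]

end Entries

/-- The maps `f` and `g`, which send each row and each column of the il-representation matrix to
its part, describe a mixed minor, whose row parts are indexed by the linear order `α` and whose
column parts are indexed by `β`. Surjectivity is not a field because mixed zones are nonempty. -/
structure IsMixedMinor {S : Type} {α β : Type*} [LinearOrder S] [LinearOrder α] [LinearOrder β]
    (η : Set (S × S)) (f : RowIdx η → α) (g : S → β) : Prop where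
  le_of_rowLE : ∀ x y : RowIdx η, rowLE x.1 y.1 → f x ≤ f y
  monotone_col : Monotone g
  zoneMixed : ∀ a b, ZoneMixed η (f ⁻¹' {a}) (g ⁻¹' {b})

namespace IsMixedMinor

variable {S : Type} {α β : Type*} [LinearOrder S] [LinearOrder α] [LinearOrder β]
  {η : Set (S × S)} {f : RowIdx η → α} {g : S → β} {x y : RowIdx η} {a a' : α} {b b' : β} {c : S}

theorem rowLE_of_lt (h : IsMixedMinor η f g) (hxy : f x < f y) : rowLE x.1 y.1 := by
  rw [rowLE_iff_toLex_le]
  refine (le_total _ _).resolve_right fun hyx => hxy.not_ge ?_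
  exact h.le_of_rowLE y x (rowLE_iff_toLex_le.mpr hyx)

theorem col_fst_le_of_lt (h : IsMixedMinor η f g) (hx : f x < a) (b : β) : g x.1.1 ≤ b := by
  obtain ⟨⟨y, rfl, y', hy', c, rfl, hne⟩, -⟩ := h.zoneMixed a b
  by_contra! hb
  have hc : c < x.1.1 := h.monotone_col.reflect_lt hb
  have hy : c < y.1.1 := hc.trans_le (h.rowLE_of_lt hx).fst_le
  have hy' : c < y'.1.1 := hc.trans_le (h.rowLE_of_lt (hx.trans_eq hy'.symm)).fst_le
  exact hne ((ilEntry_of_lt_fst hy).trans (ilEntry_of_lt_fst hy').symm)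

theorem fst_le_of_lt_of_lt (h : IsMixedMinor η f g) (hx : f x < a) (hc : b < g c) : x.1.1 ≤ c :=
  (h.monotone_col.reflect_lt ((h.col_fst_le_of_lt hx b).trans_lt hc)).le

theorem exists_mem_of_lt_of_lt (h : IsMixedMinor η f g) (ha : a < a') (hb : b' < b) :
    ∃ x : RowIdx η, x.1 ∈ η ∧ f x = a ∧ g x.1.2 = b := by
  obtain ⟨-, c, hc, c', hc', x, rfl, hne⟩ := h.zoneMixed a b
  have not_lt_fst : ∀ d ∈ g ⁻¹' {b}, ¬ d < x.1.1 := fun d hd =>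
    (h.fst_le_of_lt_of_lt ha (hb.trans_eq hd.symm)).not_gt
  rcases mem_and_eq_snd_or_of_ilEntry_ne
    (iff_of_false (not_lt_fst c hc) (not_lt_fst c' hc')) hne with ⟨hx, rfl⟩ | ⟨hx, rfl⟩
  · exact ⟨x, hx, rfl, hc⟩
  · exact ⟨x, hx, rfl, hc'⟩

theorem exists_col_snd_eq_of_fst_eq (h : IsMixedMinor η f g) (b : β) {t : S}
    (ht : ∀ z, f z = a → z.1.1 = t) : ∃ z : RowIdx η, f z = a ∧ g z.1.2 = b := by
  obtain ⟨⟨z, hz, z', hz', c, hc, hne⟩, -⟩ := h.zoneMixed a b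
  rcases mem_and_eq_snd_or_of_ilEntry_ne (by rw [ht z hz, ht z' hz']) hne with
    ⟨-, rfl⟩ | ⟨-, rfl⟩
  · exact ⟨z, hz, hc⟩
  · exact ⟨z', hz', hc⟩

theorem fst_lt_fst (h : IsMixedMinor η f g) (hx : f x < a) (hy : a < f y) (hb : b < g x.1.2) :
    x.1.1 < y.1.1 := by
  refine (h.rowLE_of_lt (hx.trans hy)).fst_le.lt_of_ne fun hxy => ?_
  have rowLE_between (z : RowIdx η) (hz : f z = a) : rowLE x.1 z.1 ∧ rowLE z.1 y.1 :=
    ⟨h.rowLE_of_lt (hx.trans_eq hz.symm), h.rowLE_of_lt (hz.trans_lt hy)⟩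
  have fst_eq (z : RowIdx η) (hz : f z = a) : z.1.1 = x.1.1 :=
    have ⟨hxz, hzy⟩ := rowLE_between z hz
    (hzy.fst_le.trans_eq hxy.symm).antisymm hxz.fst_le
  obtain ⟨z, hz, rfl⟩ := h.exists_col_snd_eq_of_fst_eq b fst_eq
  exact hb.not_ge <| h.monotone_col <|
    (rowLE_between z hz).1.snd_le_of_fst_eq (fst_eq z hz).symm

end IsMixedMinor

theorem stmt4_general {S : Type} {α β : Type*} [LinearOrder S] [LinearOrder α] [LinearOrder β]
    {η : Set (S × S)} {f : RowIdx η → α} {g : S → β} (h : IsMixedMinor η f g) {p : ℕ}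
    (r : Fin (2 * p) ↪o α) (s : Fin (p + 1) ↪o β) (π : Equiv.Perm (Fin p)) :
    ∃ (i : Fin p → RowIdx η) (c : Fin p → S),
      StrictMono (fun k => (i k).1.1) ∧
      StrictMono c ∧
      (∀ k l : Fin p, ilEntry η (i k).1 (c l) = if l = π k then 1 else 0) ∧
      ∀ k : Fin p, (i k).1 ∈ η := by
  let even (k : Fin p) : Fin (2 * p) := ⟨2 * k, by lia⟩
  let odd (k : Fin p) : Fin (2 * p) := ⟨2 * k + 1, by lia⟩
  have even_lt_odd (k : Fin p) : r (even k) < r (odd k) :=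
    r.strictMono (Nat.lt_succ_self (2 * k))
  have odd_lt_even {k l : Fin p} (hkl : k < l) : r (odd k) < r (even l) :=
    r.strictMono (show 2 * k.val + 1 < 2 * l.val by lia)
  have zero_lt_succ (l : Fin p) : s 0 < s l.succ := s.strictMono l.succ_pos
  choose i hi hfi hgi using fun k =>
    h.exists_mem_of_lt_of_lt (even_lt_odd k) (zero_lt_succ (π k))
  let c (l : Fin p) : S := (i (π.symm l)).1.2
  have hgc (l : Fin p) : g (c l) = s l.succ := by simp [c, hgi]
  refine ⟨i, c, fun k l hkl => ?_, fun k l hkl => ?_, fun k l => ?_, hi⟩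
  · exact h.fst_lt_fst (by simpa only [hfi] using even_lt_odd k)
      (by simpa only [hfi] using odd_lt_even hkl) (by simpa only [hgi] using zero_lt_succ (π k))
  · refine h.monotone_col.reflect_lt ?_
    simpa only [hgc, s.lt_iff_lt, Fin.succ_lt_succ_iff] using hkl
  · have fst_le : (i k).1.1 ≤ c l := h.fst_le_of_lt_of_lt
      (by simpa only [hfi] using even_lt_odd k) (by simpa only [hgc] using zero_lt_succ l)
    have col_eq_iff : c l = (i k).1.2 ↔ l = π k := by
      refine ⟨fun hc => ?_, fun hl => by simp [c, hl]⟩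
      simpa only [hgc, hgi, s.eq_iff_eq, Fin.succ_inj] using congrArg g hc
    simp only [ilEntry_of_mem_of_fst_le (hi k) fst_le, col_eq_iff]

/-- If the il-representation matrix of `(S, ≤, η)` has a `(2p+1)`-mixed minor,
then for every permutation `π` of `{0, …, p-1}` it contains a `p × p`
submatrix equal to the permutation matrix of `π`, whose rows are all in `η`
and have pairwise distinct first coordinates. -/
theorem stmt4 {S : Type} [LinearOrder S] [Fintype S]
    (η : Set (S × S)) (hη : ∀ i ∈ η, i.1 ≤ i.2)
    (p : ℕ) (hmm : HasMixedMinor η (2 * p + 1)) (π : Equiv.Perm (Fin p)) :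
    ∃ (i : Fin p → RowIdx η) (c : Fin p → S),
      (∀ k l : Fin p, k < l → rowLT (i k).1 (i l).1) ∧
      StrictMono c ∧
      (∀ k l : Fin p, ilEntry η (i k).1 (c l) = if l = π k then 1 else 0) ∧
      (∀ k : Fin p, (i k).1 ∈ η) ∧
      Function.Injective (fun k => (i k).1.1) := by
  obtain ⟨f, g, hf, hg, -, -, hz⟩ := hmm
  obtain ⟨i, c, hi, hc, hentry, hmem⟩ := stmt4_general (p := p) ⟨hf, hg, hz⟩
    (Fin.castLEOrderEmb (by lia)) (Fin.castLEOrderEmb (by lia)) π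
  exact ⟨i, c, fun k l hkl => .inl (hi hkl), hc, hentry, hmem, hi.injective⟩
end

section
/- Let r ∈ ℕ, s = 2^r, let Y be a finite nonempty set, and let Z = Y^s be the set of s-tuples over Y. For any sets X₁, …, X_r ⊆ Z there exist an index ℓ with 1 ≤ ℓ ≤ s, elements a₁, …, a_{ℓ−1} ∈ Y, and for each y ∈ Y elements b^y_{ℓ+1}, …, b^y_s ∈ Y, such that the set Z₀ = {(a₁, …, a_{ℓ−1}, y, b^y_{ℓ+1}, …, b^y_s) : y ∈ Y} ⊆ Z satisfies, for every i ∈ {1,…,r}, either Z₀ ⊆ X_i or Z₀ ∩ X_i = ∅. -/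
/-!
Encode the membership pattern `{i | z ∈ X i}` of a point `z` as a position: there are no more
patterns than positions. If for no position `ℓ` and no prefix below `ℓ` every entry at `ℓ` could be
continued to a point of pattern `ℓ`, then one could choose entries one after another, at each `ℓ`
an entry which excludes the pattern `ℓ` whatever follows. The resulting point would have no pattern
at all.
-/

section Fan

variable {ι : Type*} [LT ι] {Y : ι → Type*}

/-- A fan at the position `ℓ`: a family of points of the product `∀ k, Y k`, one for each value `y`
of the coordinate `ℓ`, which have their coordinates below `ℓ` in common. It abstracts the sets
`Z₀ = {(a₁, …, a_{ℓ-1}, y, b^y_{ℓ+1}, …, b^y_s) : y ∈ Y}`; the common prefix is not part of the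
data. -/
structure IsFan (ℓ : ι) (z : Y ℓ → ∀ k, Y k) : Prop where
  prefix_eq : ∀ y y' k, k < ℓ → z y k = z y' k
  apply_self : ∀ y, z y ℓ = y

theorem IsFan.eq_ite {Y : Type*} [DecidableLT ι] [DecidableEq ι] {ℓ : ι} {z : Y → ι → Y}
    (hz : IsFan (Y := fun _ ↦ Y) ℓ z) (y₀ y : Y) :
    z y = fun k ↦ if k < ℓ then z y₀ k else if k = ℓ then y else z y k := by
  funext k
  split_ifs with hlt heq
  · exact hz.prefix_eq y y₀ k hlt
  · rw [heq, hz.apply_self]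
  · rfl

variable [WellFoundedLT ι]

theorem exists_isFan_forall_apply_eq (c : (∀ k, Y k) → ι) :
    ∃ (ℓ : ι) (z : Y ℓ → ∀ k, Y k), IsFan ℓ z ∧ ∀ y, c (z y) = ℓ := by
  by_contra! hfan
  have exists_avoiding (ℓ : ι) (a : ∀ k < ℓ, Y k) :
      ∃ y, ∀ z : ∀ k, Y k, (∀ k hk, z k = a k hk) → z ℓ = y → c z ≠ ℓ := by
    by_contra! hext
    choose z hprefix hself hcolor using hext
    obtain ⟨y, hy⟩ := hfan ℓ z ⟨fun y y' k hk ↦ by rw [hprefix y k hk, hprefix y' k hk], hself⟩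
    exact hy (hcolor y)
  choose next hnext using exists_avoiding
  let z : ∀ k, Y k := wellFounded_lt.fix next
  have hz (ℓ : ι) : z ℓ = next ℓ fun k _ ↦ z k := wellFounded_lt.fix_eq next ℓ
  exact hnext (c z) (fun k _ ↦ z k) z (fun _ _ ↦ rfl) (hz (c z)) rfl

theorem exists_isFan_forall_mem_or_forall_notMem {κ : Type*} (e : Set κ ↪ ι)
    (X : κ → Set (∀ k, Y k)) :
    ∃ (ℓ : ι) (z : Y ℓ → ∀ k, Y k), IsFan ℓ z ∧ ∀ i, (∀ y, z y ∈ X i) ∨ ∀ y, z y ∉ X i := by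
  obtain ⟨ℓ, z, hz, hcolor⟩ := exists_isFan_forall_apply_eq fun z ↦ e {i | z ∈ X i}
  have mem_iff (y y' : Y ℓ) (i : κ) : z y ∈ X i ↔ z y' ∈ X i :=
    Set.ext_iff.mp (e.injective ((hcolor y).trans (hcolor y').symm)) i
  refine ⟨ℓ, z, hz, fun i ↦ or_iff_not_imp_right.mpr fun hmem y ↦ ?_⟩
  obtain ⟨y', hy'⟩ := not_forall_not.mp hmem
  exact (mem_iff y y' i).mpr hy'

end Fan

theorem stmt5_general {ι κ : Type*} [LT ι] [WellFoundedLT ι] [DecidableLT ι] [DecidableEq ι]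
    (e : Set κ ↪ ι) {Y : Type*} [Nonempty Y] (X : κ → Set (ι → Y)) :
    ∃ (ℓ : ι) (a : ι → Y) (b : Y → ι → Y),
      ∀ i : κ,
        (∀ y : Y, (fun k ↦ if k < ℓ then a k else if k = ℓ then y else b y k) ∈ X i) ∨
        (∀ y : Y, (fun k ↦ if k < ℓ then a k else if k = ℓ then y else b y k) ∉ X i) := by
  obtain ⟨ℓ, z, hz, hX⟩ := exists_isFan_forall_mem_or_forall_notMem e X
  obtain ⟨y₀⟩ := ‹Nonempty Y›
  refine ⟨ℓ, z y₀, z, ?_⟩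
  simpa only [← hz.eq_ite y₀] using hX

/-- Given `r` subsets `X₁, …, X_r` of `Z = Y^(2^r)`, there is a position `ℓ`,
a prefix `a₁, …, a_{ℓ-1}` and, for each `y ∈ Y`, a suffix
`b^y_{ℓ+1}, …, b^y_s`, such that the set
`Z₀ = {(a₁, …, a_{ℓ-1}, y, b^y_{ℓ+1}, …, b^y_s) : y ∈ Y}` is homogeneous with
respect to every `Xᵢ`: it is contained in `Xᵢ` or disjoint from it. -/
theorem stmt5 (r : ℕ) (Y : Type) [Fintype Y] [Nonempty Y]
    (X : Fin r → Set (Fin (2 ^ r) → Y)) :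
    ∃ (ℓ : Fin (2 ^ r)) (a : Fin (2 ^ r) → Y) (b : Y → Fin (2 ^ r) → Y),
      ∀ i : Fin r,
        (∀ y : Y, (fun k => if k < ℓ then a k else if k = ℓ then y else b y k) ∈ X i) ∨
        (∀ y : Y, (fun k => if k < ℓ then a k else if k = ℓ then y else b y k) ∉ X i) :=
  stmt5_general (Fintype.equivFinOfCardEq (by simp)).toEmbedding X
end

section
/- Let (S, ≤) be a finite linearly ordered set, η ⊆ S × S a relation with (s₁,s₂) ∈ η implying s₁ ≤ s₂, and A the il-representation matrix of (S, ≤, η). Then: (i) for all rows x = (s₁,s₂) and y = (t₁,t₂) in R, one has {c ∈ S : a_{x,c} = 2} ⊆ {c ∈ S : a_{y,c} = 2} if and only if s₁ ≤ t₁; (ii) for all x = (s₁,s₂) ∈ η and y = (t₁,t₂) ∈ R, one has (for every c ∈ S, a_{x,c} = 1 implies a_{y,c} ≠ 2) if and only if t₁ ≤ s₂; (iii) for all columns c, c' ∈ S, one has {i ∈ R : a_{i,c} = 2} ⊆ {i ∈ R : a_{i,c'} = 2} if and only if c' ≤ c. -/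
section

variable {S : Type} [LinearOrder S] {η : Set (S × S)}

theorem ilEntry_eq_two_iff {i : S × S} {j : S} : ilEntry η i j = 2 ↔ j < i.1 := by
  unfold ilEntry
  split_ifs <;> simp_all

theorem ilEntry_eq_one_iff {i : S × S} {j : S} (hi : i ∈ η) (hle : i.1 ≤ i.2) :
    ilEntry η i j = 1 ↔ j = i.2 := by
  unfold ilEntry
  split_ifs with hlt hone
  · have hne : j ≠ i.2 := (hlt.trans_le hle).ne
    simp [hne]
  · simp [hone.2]
  · simpa [hi] using hone

theorem row_twos_eq_Iio (i : S × S) : {c | ilEntry η i c = 2} = Set.Iio i.1 :=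
  Set.ext fun _ => ilEntry_eq_two_iff

theorem row_twos_subset_iff (x y : S × S) :
    {c | ilEntry η x c = 2} ⊆ {c | ilEntry η y c = 2} ↔ x.1 ≤ y.1 := by
  rw [row_twos_eq_Iio, row_twos_eq_Iio, Set.Iio_subset_Iio_iff]

theorem row_one_avoids_twos_iff {x : S × S} (hx : x ∈ η) (hle : x.1 ≤ x.2) (y : S × S) :
    (∀ c, ilEntry η x c = 1 → ilEntry η y c ≠ 2) ↔ y.1 ≤ x.2 := by
  simp only [ilEntry_eq_one_iff hx hle, ne_eq, ilEntry_eq_two_iff, not_lt, forall_eq]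

theorem column_twos_subset_iff (c c' : S) :
    {i : RowIdx η | ilEntry η i.1 c = 2} ⊆ {i : RowIdx η | ilEntry η i.1 c' = 2} ↔ c' ≤ c := by
  simp only [Set.ofPred_subset_ofPred, ilEntry_eq_two_iff]
  refine ⟨fun hsub => ?_, fun hle i hi => hle.trans_lt hi⟩
  let diagRow : RowIdx η := ⟨(c', c'), Or.inr rfl⟩
  exact not_lt.mp fun hlt => lt_irrefl c' (hsub diagRow hlt)

end

theorem stmt7_general {S : Type} [LinearOrder S]
    (η : Set (S × S)) (hη : ∀ i ∈ η, i.1 ≤ i.2) :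
    (∀ x y : RowIdx η,
      ({c : S | ilEntry η x.1 c = 2} ⊆ {c : S | ilEntry η y.1 c = 2} ↔ x.1.1 ≤ y.1.1)) ∧
    (∀ x y : RowIdx η, x.1 ∈ η →
      ((∀ c : S, ilEntry η x.1 c = 1 → ilEntry η y.1 c ≠ 2) ↔ y.1.1 ≤ x.1.2)) ∧
    (∀ c c' : S,
      ({i : RowIdx η | ilEntry η i.1 c = 2} ⊆ {i : RowIdx η | ilEntry η i.1 c' = 2} ↔ c' ≤ c)) :=
  ⟨fun x y => row_twos_subset_iff x.1 y.1,
    fun x y hx => row_one_avoids_twos_iff hx (hη x.1 hx) y.1,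
    column_twos_subset_iff⟩

/-- Comparisons of interval ends are readable off the il-representation
matrix: (i) containment of the `2`-entry sets of two rows `x = (s₁,s₂)`,
`y = (t₁,t₂)` is equivalent to `s₁ ≤ t₁`; (ii) for `x ∈ η`, the `1`-entry of
row `x` avoiding the `2`-entries of row `y` is equivalent to `t₁ ≤ s₂`;
(iii) containment of the `2`-entry sets of columns `c`, `c'` is equivalent to
`c' ≤ c`. -/
theorem stmt7 {S : Type} [LinearOrder S] [Fintype S]
    (η : Set (S × S)) (hη : ∀ i ∈ η, i.1 ≤ i.2) :
    (∀ x y : RowIdx η,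
      ({c : S | ilEntry η x.1 c = 2} ⊆ {c : S | ilEntry η y.1 c = 2} ↔ x.1.1 ≤ y.1.1)) ∧
    (∀ x y : RowIdx η, x.1 ∈ η →
      ((∀ c : S, ilEntry η x.1 c = 1 → ilEntry η y.1 c ≠ 2) ↔ y.1.1 ≤ x.1.2)) ∧
    (∀ c c' : S,
      ({i : RowIdx η | ilEntry η i.1 c = 2} ⊆ {i : RowIdx η | ilEntry η i.1 c' = 2} ↔ c' ≤ c)) :=
  stmt7_general η hη
end

section
/- For every p ≥ 1 and every permutation π of {1,…,p}, there exists a finite simple graph H that is an interval graph and exposes π. -/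
/-- `G` is an interval graph: vertices carry closed rational intervals, and
distinct vertices are adjacent iff their intervals intersect. -/
def IsIntervalGraph {n : ℕ} (G : SimpleGraph (Fin n)) : Prop :=
  ∃ l r : Fin n → ℚ, (∀ v, l v ≤ r v) ∧
    ∀ u v : Fin n, u ≠ v →
      (G.Adj u v ↔ max (l u) (l v) ≤ min (r u) (r v))

/-- The graph `H` exposes the permutation `π` of `{0, …, p-1}`. -/
def Exposes {V : Type} {p : ℕ} (H : SimpleGraph V) (π : Equiv.Perm (Fin p)) : Prop :=
  ∃ w w₁ w₂ : Fin p → V,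
    Function.Injective w ∧ Function.Injective w₁ ∧ Function.Injective w₂ ∧
    Disjoint (Set.range w) (Set.range w₁) ∧
    Disjoint (Set.range w) (Set.range w₂) ∧
    Disjoint (Set.range w₁) (Set.range w₂) ∧
    Set.range w ∪ Set.range w₁ ∪ Set.range w₂ = Set.univ ∧
    (∀ i, (H.neighborSet (w i) ∩ Set.range w₁).Nonempty) ∧
    (∀ i, (H.neighborSet (w i) ∩ Set.range w₂).Nonempty) ∧
    (∀ i j : Fin p, i < j →
      H.neighborSet (w i) ∩ Set.range w₁ ⊂ H.neighborSet (w j) ∩ Set.range w₁) ∧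
    (∀ i j : Fin p, i < j →
      H.neighborSet (w (π i)) ∩ Set.range w₂ ⊂ H.neighborSet (w (π j)) ∩ Set.range w₂)

/-!
Let `w i` carry the interval `[-i, π⁻¹ i]`, while the `j`-th vertices of `W₁` and `W₂` carry the
points `-j` and `j`. The left endpoint of `w i` decides which points of `W₁` it contains, namely
those with `j ≤ i`, and its right endpoint independently decides which points of `W₂` it contains,
namely those with `j ≤ π⁻¹ i`. So the neighbourhoods in `W₁` grow along `w 0, w 1, …` and those in
`W₂` grow along `w (π 0), w (π 1), …`.
-/

section IntervalGraph

variable {V α : Type*}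

/-- The interval graph of a family `I` of nonempty closed intervals: two distinct vertices are
adjacent when their intervals meet. Repeated intervals are allowed. -/
def intervalGraph [PartialOrder α] (I : V → NonemptyInterval α) : SimpleGraph V where
  Adj u v := u ≠ v ∧ ((I u : Set α) ∩ I v).Nonempty
  symm := ⟨fun _ _ h ↦ ⟨h.1.symm, Set.inter_comm _ _ ▸ h.2⟩⟩
  loopless := ⟨fun _ h ↦ h.1 rfl⟩

theorem intervalGraph_adj_iff_mem_of_eq_pure [PartialOrder α] {I : V → NonemptyInterval α}
    {u v : V} {x : α} (huv : u ≠ v) (hv : I v = NonemptyInterval.pure x) :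
    (intervalGraph I).Adj u v ↔ x ∈ I u := by
  simp [intervalGraph, huv, hv]

theorem intervalGraph_adj_iff_max_le_min [LinearOrder α] {I : V → NonemptyInterval α} {u v : V}
    (huv : u ≠ v) :
    (intervalGraph I).Adj u v ↔ max (I u).fst (I v).fst ≤ min (I u).snd (I v).snd := by
  simp only [intervalGraph, ne_eq, huv, not_false_eq_true, true_and, NonemptyInterval.coe_def,
    Set.Icc_inter_Icc, Set.nonempty_Icc]

theorem isIntervalGraph_intervalGraph {n : ℕ} (I : Fin n → NonemptyInterval ℚ) :
    IsIntervalGraph (intervalGraph I) :=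
  ⟨fun v ↦ (I v).fst, fun v ↦ (I v).snd, fun v ↦ (I v).fst_le_snd,
    fun _ _ huv ↦ intervalGraph_adj_iff_max_le_min huv⟩

end IntervalGraph

theorem neighborSet_inter_range_eq_image {V ι : Type*} {H : SimpleGraph V} {v : V}
    {b : ι → V} {s : Set ι} (h : ∀ j, H.Adj v (b j) ↔ j ∈ s) :
    H.neighborSet v ∩ Set.range b = b '' s := by
  rw [← Set.image_preimage_eq_inter_range]
  exact congrArg (b '' ·) (Set.ext h)

theorem exposes_of_adj_iff_le {V : Type} {p : ℕ} {H : SimpleGraph V} {π : Equiv.Perm (Fin p)}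
    (e : Fin p ⊕ Fin p ⊕ Fin p ≃ V)
    (h₁ : ∀ i j, H.Adj (e (.inl i)) (e (.inr (.inl j))) ↔ j ≤ i)
    (h₂ : ∀ i j, H.Adj (e (.inl i)) (e (.inr (.inr j))) ↔ j ≤ π.symm i) :
    Exposes H π := by
  let w i := e (.inl i)
  let w₁ i := e (.inr (.inl i))
  let w₂ i := e (.inr (.inr i))
  have inj₁ : w₁.Injective := e.injective.comp (Sum.inr_injective.comp Sum.inl_injective)
  have inj₂ : w₂.Injective := e.injective.comp (Sum.inr_injective.comp Sum.inr_injective)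
  have nbr₁ i : H.neighborSet (w i) ∩ Set.range w₁ = w₁ '' Set.Iic i :=
    neighborSet_inter_range_eq_image (h₁ i)
  have nbr₂ i : H.neighborSet (w i) ∩ Set.range w₂ = w₂ '' Set.Iic (π.symm i) :=
    neighborSet_inter_range_eq_image (h₂ i)
  have disj₀₁ : Disjoint (Set.range w) (Set.range w₁) := by
    simp [w, w₁, Set.disjoint_range_iff]
  have disj₀₂ : Disjoint (Set.range w) (Set.range w₂) := by
    simp [w, w₂, Set.disjoint_range_iff]
  have disj₁₂ : Disjoint (Set.range w₁) (Set.range w₂) := by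
    simp [w₁, w₂, Set.disjoint_range_iff]
  have cover : Set.range w ∪ Set.range w₁ ∪ Set.range w₂ = Set.univ := by
    simp [w, w₁, w₂, Set.eq_univ_iff_forall, e.surjective.forall]
  refine ⟨w, w₁, w₂, e.injective.comp Sum.inl_injective, inj₁, inj₂, disj₀₁, disj₀₂, disj₁₂, cover,
    fun i ↦ ?_, fun i ↦ ?_, fun i j hij ↦ ?_, fun i j hij ↦ ?_⟩
  · exact nbr₁ i ▸ Set.nonempty_Iic.image w₁
  · exact nbr₂ i ▸ Set.nonempty_Iic.image w₂
  · rw [nbr₁, nbr₁]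
    exact inj₁.image_strictMono (Set.Iic_ssubset_Iic.2 hij)
  · rw [nbr₂, nbr₂, π.symm_apply_apply, π.symm_apply_apply]
    exact inj₂.image_strictMono (Set.Iic_ssubset_Iic.2 hij)

theorem neg_natCast_le_natCast {R : Type*} [Ring R] [PartialOrder R] [IsOrderedRing R] (m n : ℕ) :
    -(m : R) ≤ n :=
  (neg_nonpos.2 m.cast_nonneg).trans n.cast_nonneg

section ExposingInterval

variable {p : ℕ} (π : Equiv.Perm (Fin p))

/-- The intervals of a graph exposing `π`. The three summands of the index type stand for `W`, `W₁`
and `W₂`, in this order. -/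
def exposingInterval : Fin p ⊕ Fin p ⊕ Fin p → NonemptyInterval ℚ
  | .inl i => ⟨(-(i : ℕ), (π.symm i : ℕ)), neg_natCast_le_natCast _ _⟩
  | .inr (.inl j) => .pure (-(j : ℕ))
  | .inr (.inr j) => .pure (j : ℕ)

theorem neg_mem_exposingInterval_inl_iff (i j : Fin p) :
    -((j : ℕ) : ℚ) ∈ exposingInterval π (.inl i) ↔ j ≤ i := by
  have : -((j : ℕ) : ℚ) ≤ (π.symm i : ℕ) := neg_natCast_le_natCast _ _
  simp [exposingInterval, NonemptyInterval.mem_def, this]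

theorem mem_exposingInterval_inl_iff (i j : Fin p) :
    ((j : ℕ) : ℚ) ∈ exposingInterval π (.inl i) ↔ j ≤ π.symm i := by
  have : -((i : ℕ) : ℚ) ≤ (j : ℕ) := neg_natCast_le_natCast _ _
  simp [exposingInterval, NonemptyInterval.mem_def, this]

theorem exposes_intervalGraph_exposingInterval {V : Type} (e : Fin p ⊕ Fin p ⊕ Fin p ≃ V) :
    Exposes (intervalGraph (exposingInterval π ∘ e.symm)) π := by
  let I := exposingInterval π ∘ e.symm
  have interval_w i : I (e (.inl i)) = exposingInterval π (.inl i) := by simp [I]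
  have interval_w₁ j : I (e (.inr (.inl j))) = .pure (-((j : ℕ) : ℚ)) := by
    simp [I, exposingInterval]
  have interval_w₂ j : I (e (.inr (.inr j))) = .pure ((j : ℕ) : ℚ) := by
    simp [I, exposingInterval]
  refine exposes_of_adj_iff_le e (fun i j ↦ ?_) (fun i j ↦ ?_)
  · rw [intervalGraph_adj_iff_mem_of_eq_pure (by simp) (interval_w₁ j), interval_w,
      neg_mem_exposingInterval_inl_iff]
  · rw [intervalGraph_adj_iff_mem_of_eq_pure (by simp) (interval_w₂ j), interval_w,
      mem_exposingInterval_inl_iff]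

end ExposingInterval

/-- For every permutation `π`, some interval graph exposes `π`. -/
theorem stmt10 (p : ℕ) (hp : 1 ≤ p) (π : Equiv.Perm (Fin p)) :
    ∃ (n : ℕ) (H : SimpleGraph (Fin n)), IsIntervalGraph H ∧ Exposes H π := by
  let e := Fintype.equivFin (Fin p ⊕ Fin p ⊕ Fin p)
  exact ⟨_, intervalGraph (exposingInterval π ∘ e.symm), isIntervalGraph_intervalGraph _,
    exposes_intervalGraph_exposingInterval π e⟩
end

section
/- Let G be the intersection graph of closed rational intervals [l_v, r_v] (l_v ≤ r_v) assigned to its vertices v. Suppose x₁, …, x_p, y₁, …, y_p, z₁, …, z_p are 3p distinct vertices of G such that: l_{x₁} < l_{x₂} < … < l_{x_p}; the values r_{x₁}, …, r_{x_p} are pairwise distinct; l_{x_i} < r_{x_j} for all i, j; for each i, r_{y_i} = l_{x_i}; and for each i, l_{z_i} = r_{x_i}. Let τ be the permutation of {1,…,p} with r_{x_{τ(1)}} < r_{x_{τ(2)}} < … < r_{x_{τ(p)}}. Then the induced subgraph H of G on {x₁,…,x_p} ∪ {y₁,…,y_p} ∪ {z₁,…,z_p} satisfies: N_H(x_k) ∩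 {y₁,…,y_p} = {y_i : i ≥ k} and N_H(x_k) ∩ {z₁,…,z_p} = {z_i : r_{x_i} ≤ r_{x_k}} for every k; consequently, taking W = {w₁,…,w_p} with w_k = x_{p+1−k}, W₁ = {y₁,…,y_p} and W₂ = {z₁,…,z_p}, the graph H exposes the permutation π of {1,…,p} given by π(j) = p + 1 − τ(j). -/
/-!
Since `r (y i) = l (x i)` lies below every `r (x k)`, adjacency of `x k` and `y i` only compares the
left ends of `x k` and `x i`; dually, adjacency of `x k` and `z i` only compares right ends. So `x`
spans a half graph with `y` once both are listed by decreasing left end of `x`, and one with `z`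
once both are listed by increasing right end of `x`. In a half graph the neighborhoods form a
strictly increasing chain, and the permutation relating the two listings of `x` is `rev ∘ τ`.
-/

/-- An interval representation of `G`: the closed intervals `[l v, r v]`, given by their endpoint
functions, have `G` as their intersection graph. -/
structure IsIntervalRepresentation {V α : Type*} [LinearOrder α] (G : SimpleGraph V)
    (l r : V → α) : Prop where
  left_le_right : ∀ v, l v ≤ r v
  adj_iff : ∀ u v, u ≠ v → (G.Adj u v ↔ max (l u) (l v) ≤ min (r u) (r v))

namespace IsIntervalRepresentation

variable {V α : Type*} [LinearOrder α] {G : SimpleGraph V} {l r : V → α} {u v : V}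

theorem ne_of_right_lt_left (h : IsIntervalRepresentation G l r) (huv : r u < l v) : u ≠ v := by
  rintro rfl
  exact (h.left_le_right u).not_gt huv

theorem adj_iff_left_le_right (h : IsIntervalRepresentation G l r) (hne : u ≠ v) :
    G.Adj u v ↔ l u ≤ r v ∧ l v ≤ r u := by
  simp [h.adj_iff u v hne, h.left_le_right, and_comm]

theorem adj_iff_of_right_lt_right (h : IsIntervalRepresentation G l r) (hvu : r v < r u) :
    G.Adj u v ↔ l u ≤ r v := by
  rw [h.adj_iff_left_le_right (ne_of_apply_ne r hvu.ne')]
  exact and_iff_left ((h.left_le_right v).trans hvu.le)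

theorem adj_iff_of_left_lt_left (h : IsIntervalRepresentation G l r) (huv : l u < l v) :
    G.Adj u v ↔ l v ≤ r u := by
  rw [h.adj_iff_left_le_right (ne_of_apply_ne l huv.ne)]
  exact and_iff_right (huv.le.trans (h.left_le_right v))

end IsIntervalRepresentation

/-- The families `x` and `y` span a half graph in `H`: `x i` is adjacent to exactly those `y j` with
`j ≤ i`. Adjacencies within each family are unconstrained. -/
def IsHalfGraph {ι V : Type*} [LE ι] (H : SimpleGraph V) (x y : ι → V) : Prop :=
  ∀ i j, H.Adj (x i) (y j) ↔ j ≤ i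

namespace IsHalfGraph

variable {ι V : Type*} {H : SimpleGraph V} {x y : ι → V}

theorem injective_left [PartialOrder ι] (h : IsHalfGraph H x y) : Function.Injective x := by
  intro i j hij
  exact eq_of_forall_le_iff fun k => by rw [← h i k, ← h j k, hij]

theorem injective_right [PartialOrder ι] (h : IsHalfGraph H x y) : Function.Injective y := by
  intro i j hij
  exact eq_of_forall_ge_iff fun k => by rw [← h k i, ← h k j, hij]

theorem neighborSet_inter_range_nonempty [Preorder ι] (h : IsHalfGraph H x y) (i : ι) :
    (H.neighborSet (x i) ∩ Set.range y).Nonempty :=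
  ⟨y i, (h i i).2 le_rfl, i, rfl⟩

theorem strictMono_neighborSet_inter_range [Preorder ι] (h : IsHalfGraph H x y) :
    StrictMono fun i => H.neighborSet (x i) ∩ Set.range y := by
  intro i j hij
  refine ⟨?_, fun hsub => ?_⟩
  · rintro _ ⟨hadj, k, rfl⟩
    exact ⟨(h j k).2 (((h i k).1 hadj).trans hij.le), k, rfl⟩
  · have hadj : H.Adj (x i) (y j) := (hsub ⟨(h j j).2 le_rfl, j, rfl⟩).1
    exact hij.not_ge ((h i j).1 hadj)

end IsHalfGraph

section Exposes

variable {V : Type} {p : ℕ} {π : Equiv.Perm (Fin p)} {w w₁ w₂ : Fin p → V}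

theorem exposes_of_isHalfGraph {H : SimpleGraph V}
    (h₁ : IsHalfGraph H w w₁) (h₂ : IsHalfGraph H (w ∘ π) w₂)
    (hw₁ : ∀ i j, w i ≠ w₁ j) (hw₂ : ∀ i j, w i ≠ w₂ j) (hw₁₂ : ∀ i j, w₁ i ≠ w₂ j)
    (hcover : Set.range w ∪ Set.range w₁ ∪ Set.range w₂ = Set.univ) : Exposes H π := by
  have hnonempty (i : Fin p) : (H.neighborSet (w i) ∩ Set.range w₂).Nonempty := by
    simpa using h₂.neighborSet_inter_range_nonempty (π.symm i)
  exact ⟨w, w₁, w₂, h₁.injective_left, h₁.injective_right, h₂.injective_right,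
    Set.disjoint_range_iff.2 hw₁, Set.disjoint_range_iff.2 hw₂, Set.disjoint_range_iff.2 hw₁₂,
    hcover, h₁.neighborSet_inter_range_nonempty, hnonempty,
    fun _ _ hij => h₁.strictMono_neighborSet_inter_range hij,
    fun _ _ hij => h₂.strictMono_neighborSet_inter_range hij⟩

theorem exposes_induce_of_isHalfGraph {G : SimpleGraph V} {s : Set V}
    (h₁ : IsHalfGraph G w w₁) (h₂ : IsHalfGraph G (w ∘ π) w₂)
    (hw₁ : ∀ i j, w i ≠ w₁ j) (hw₂ : ∀ i j, w i ≠ w₂ j) (hw₁₂ : ∀ i j, w₁ i ≠ w₂ j)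
    (hs : Set.range w ∪ Set.range w₁ ∪ Set.range w₂ = s) : Exposes (G.induce s) π := by
  subst hs
  let W : Set V := Set.range w ∪ Set.range w₁ ∪ Set.range w₂
  let v (i : Fin p) : W := ⟨w i, .inl (.inl ⟨i, rfl⟩)⟩
  let v₁ (i : Fin p) : W := ⟨w₁ i, .inl (.inr ⟨i, rfl⟩)⟩
  let v₂ (i : Fin p) : W := ⟨w₂ i, .inr ⟨i, rfl⟩⟩
  have hcover : Set.range v ∪ Set.range v₁ ∪ Set.range v₂ = Set.univ := by
    refine Set.eq_univ_of_forall ?_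
    rintro ⟨_, (⟨i, rfl⟩ | ⟨i, rfl⟩) | ⟨i, rfl⟩⟩
    · exact .inl (.inl ⟨i, rfl⟩)
    · exact .inl (.inr ⟨i, rfl⟩)
    · exact .inr ⟨i, rfl⟩
  exact exposes_of_isHalfGraph (H := G.induce W) (w := v) (w₁ := v₁) (w₂ := v₂) h₁ h₂
    (fun i j => ne_of_apply_ne Subtype.val (hw₁ i j))
    (fun i j => ne_of_apply_ne Subtype.val (hw₂ i j))
    (fun i j => ne_of_apply_ne Subtype.val (hw₁₂ i j)) hcover

end Exposes

theorem stmt16_general {V : Type} {α : Type*} [LinearOrder α] {G : SimpleGraph V} {l r : V → α}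
    (hG : IsIntervalRepresentation G l r) {p : ℕ} {x y z : Fin p → V}
    (hlx : StrictMono fun i => l (x i)) (hlxr : ∀ i j, l (x i) < r (x j))
    (hry : ∀ i, r (y i) = l (x i)) (hlz : ∀ i, l (z i) = r (x i))
    {τ : Equiv.Perm (Fin p)} (hτ : StrictMono fun k => r (x (τ k))) :
    (∀ k i, G.Adj (x k) (y i) ↔ k ≤ i) ∧
    (∀ k i, G.Adj (x k) (z i) ↔ r (x i) ≤ r (x k)) ∧
    Exposes (G.induce (Set.range x ∪ Set.range y ∪ Set.range z)) (τ.trans Fin.revPerm) := by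
  have hyx (i k) : r (y i) < r (x k) := (hry i).trans_lt (hlxr i k)
  have hxz (k i) : l (x k) < l (z i) := (hlxr k i).trans_eq (hlz i).symm
  have hyz (i j) : r (y i) < l (z j) := (hyx i j).trans_eq (hlz j).symm
  have adj_y (k i) : G.Adj (x k) (y i) ↔ k ≤ i := by
    rw [hG.adj_iff_of_right_lt_right (hyx i k), hry]
    exact hlx.le_iff_le
  have adj_z (k i) : G.Adj (x k) (z i) ↔ r (x i) ≤ r (x k) := by
    rw [hG.adj_iff_of_left_lt_left (hxz k i), hlz]
  refine ⟨adj_y, adj_z, ?_⟩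
  have half_y : IsHalfGraph G (x ∘ Fin.revPerm) (y ∘ Fin.revPerm) :=
    fun k i => (adj_y _ _).trans Fin.rev_le_rev
  have half_z : IsHalfGraph G ((x ∘ Fin.revPerm) ∘ τ.trans Fin.revPerm) (z ∘ τ) := fun k i => by
    simpa [adj_z] using hτ.le_iff_le
  exact exposes_induce_of_isHalfGraph half_y half_z
    (fun _ _ => ne_of_apply_ne r (hyx _ _).ne')
    (fun _ _ => ne_of_apply_ne l (hxz _ _).ne)
    (fun _ _ => hG.ne_of_right_lt_left (hyz _ _))
    (by simp only [EquivLike.range_comp])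

/-- In an interval graph `G` (given with its interval representation `l`, `r`)
take distinct vertices `x₁, …, x_p`, `y₁, …, y_p`, `z₁, …, z_p` with
increasing left ends of the `x`'s, pairwise distinct right ends of the `x`'s,
every left end of an `x` below every right end of an `x`, and `yᵢ` ending at
the left end of `xᵢ` and `zᵢ` starting at the right end of `xᵢ`.  Let `τ` sort
the right ends of the `x`'s.  Then the neighborhoods of `x_k` among the `y`'s
and the `z`'s are as described, and consequently the induced subgraph on all
these vertices exposes the permutation `j ↦ p + 1 - τ(j)` (realized `0`-based
as `j ↦ rev (τ j)`), witnessed by `w_k = x_{p+1-k}`, `W₁ = {y₁, …, y_p}`,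
`W₂ = {z₁, …, z_p}`. -/
theorem stmt16 {V : Type} [Fintype V] (G : SimpleGraph V)
    (l r : V → ℚ) (hlr : ∀ v, l v ≤ r v)
    (hadj : ∀ u v : V, u ≠ v → (G.Adj u v ↔ max (l u) (l v) ≤ min (r u) (r v)))
    (p : ℕ) (hp : 1 ≤ p)
    (x y z : Fin p → V)
    (hx : Function.Injective x) (hy : Function.Injective y) (hz : Function.Injective z)
    (hxy : Disjoint (Set.range x) (Set.range y))
    (hxz : Disjoint (Set.range x) (Set.range z))
    (hyz : Disjoint (Set.range y) (Set.range z))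
    (hlx : StrictMono (fun i => l (x i)))
    (hrx : Function.Injective (fun i => r (x i)))
    (hlxr : ∀ i j : Fin p, l (x i) < r (x j))
    (hry : ∀ i, r (y i) = l (x i))
    (hlz : ∀ i, l (z i) = r (x i))
    (τ : Equiv.Perm (Fin p)) (hτ : StrictMono (fun k => r (x (τ k)))) :
    (∀ k i : Fin p, G.Adj (x k) (y i) ↔ k ≤ i) ∧
    (∀ k i : Fin p, G.Adj (x k) (z i) ↔ r (x i) ≤ r (x k)) ∧
    Exposes (G.induce (Set.range x ∪ Set.range y ∪ Set.range z))
      (τ.trans Fin.revPerm) :=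
  stmt16_general ⟨hlr, hadj⟩ hlx hlxr hry hlz hτ
end
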